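/- Let n ≥ 1 and let X be a real n×n matrix (not necessarily symmetric). Then the unique minimizer of ‖X − Y‖_F over the affine set {Y ∈ ℝ^{n×n} : Y𝟙 = 𝟙 and Yᵀ𝟙 = 𝟙} is Y* = X + ((1/n)I + ((𝟙ᵀX𝟙)/n²)I − (1/n)X)𝟙𝟙ᵀ − (1/n)𝟙𝟙ᵀX, where I is the n×n identity matrix. -/

import Mathlib

open Finset

def IsDoublyStochastic {n : ℕ} (D : Matrix (Fin n) (Fin n) ℝ) : Prop :=
  (∀ i j, 0 ≤ D i j) ∧ (∀ i, ∑ j, D i j = 1) ∧ (∀ j, ∑ i, D i j = 1)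

noncomputable def finner {n : ℕ} (A B : Matrix (Fin n) (Fin n) ℝ) : ℝ :=
  ∑ i, ∑ j, A i j * B i j

noncomputable def fnorm {n : ℕ} (A : Matrix (Fin n) (Fin n) ℝ) : ℝ :=
  Real.sqrt (finner A A)

noncomputable def Gamma {n : ℕ} (θ : ℝ) (X D : Matrix (Fin n) (Fin n) ℝ) : ℝ :=
  finner D X - (1 / θ) * finner D D

noncomputable def onesMatrix (n : ℕ) : Matrix (Fin n) (Fin n) ℝ :=
  Matrix.of (fun _ _ => (1 : ℝ))

/-- 𝒫₁(X) = X + ((1/n)I + ((𝟙ᵀX𝟙)/n²)I − (1/n)X)𝟙𝟙ᵀ − (1/n)𝟙𝟙ᵀX -/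
noncomputable def P1 {n : ℕ} (X : Matrix (Fin n) (Fin n) ℝ) : Matrix (Fin n) (Fin n) ℝ :=
  X + ((1 / (n : ℝ)) • (1 : Matrix (Fin n) (Fin n) ℝ)
        + ((∑ i, ∑ j, X i j) / (n : ℝ) ^ 2) • (1 : Matrix (Fin n) (Fin n) ℝ)
        - (1 / (n : ℝ)) • X) * onesMatrix n
    - (1 / (n : ℝ)) • (onesMatrix n * X)

/-- 𝒫₃(X) = X + (((𝟙ᵀX𝟙)/n²)I − (1/n)X)𝟙𝟙ᵀ − (1/n)𝟙𝟙ᵀX -/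
noncomputable def P3 {n : ℕ} (X : Matrix (Fin n) (Fin n) ℝ) : Matrix (Fin n) (Fin n) ℝ :=
  X + (((∑ i, ∑ j, X i j) / (n : ℝ) ^ 2) • (1 : Matrix (Fin n) (Fin n) ℝ)
        - (1 / (n : ℝ)) • X) * onesMatrix n
    - (1 / (n : ℝ)) • (onesMatrix n * X)

/-!
The correction `X - P1 X` has the form `u 𝟙ᵀ + 𝟙 vᵀ`, so it is Frobenius-orthogonal to every matrix
whose row and column sums all vanish, in particular to `P1 X - Y` for every admissible `Y`.
Pythagoras then gives `‖X - Y‖² = ‖X - P1 X‖² + ‖P1 X - Y‖²`.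
-/

section

open Matrix

section RankOne

variable {m n R : Type*} [Fintype m] [Fintype n] [CommSemiring R]

theorem trace_transpose_vecMulVec_mul (u : m → R) (v : n → R) (D : Matrix m n R) :
    ((vecMulVec u v)ᵀ * D).trace = u ⬝ᵥ D *ᵥ v := by
  rw [transpose_vecMulVec, vecMulVec_mul, trace_vecMulVec, dotProduct_comm, dotProduct_mulVec]

theorem trace_transpose_vecMulVec_one_add_one_vecMulVec_mul_eq_zero (u : m → R) (v : n → R)
    {D : Matrix m n R} (hrow : D *ᵥ 1 = 0) (hcol : 1 ᵥ* D = 0) :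
    ((vecMulVec u 1 + vecMulVec 1 v)ᵀ * D).trace = 0 := by
  rw [transpose_add, Matrix.add_mul, trace_add, trace_transpose_vecMulVec_mul,
    trace_transpose_vecMulVec_mul, hrow, dotProduct_mulVec, hcol, dotProduct_zero,
    zero_dotProduct, add_zero]

end RankOne

theorem dotProduct_self_lt_dotProduct_add_self {ι R : Type*} [Fintype ι] [CommRing R]
    [LinearOrder R] [IsStrictOrderedRing R] {x y : ι → R} (hxy : x ⬝ᵥ y = 0) (hy : y ≠ 0) :
    x ⬝ᵥ x < (x + y) ⬝ᵥ (x + y) := by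
  have hy_pos : 0 < y ⬝ᵥ y :=
    (sum_nonneg fun i _ => mul_self_nonneg (y i)).lt_of_ne' (mt dotProduct_self_eq_zero.mp hy)
  calc x ⬝ᵥ x < x ⬝ᵥ x + y ⬝ᵥ y := lt_add_of_pos_right _ hy_pos
    _ = (x + y) ⬝ᵥ (x + y) := by
      simp only [add_dotProduct, dotProduct_add, dotProduct_comm y x, hxy, add_zero, zero_add]

section Frobenius

variable {n : ℕ}

theorem finner_eq_vec_dotProduct_vec (A B : Matrix (Fin n) (Fin n) ℝ) :
    finner A B = vec A ⬝ᵥ vec B := by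
  rw [vec_dotProduct_vec, finner, sum_comm]
  rfl

theorem finner_eq_trace_transpose_mul (A B : Matrix (Fin n) (Fin n) ℝ) :
    finner A B = (Aᵀ * B).trace := by
  rw [finner_eq_vec_dotProduct_vec, vec_dotProduct_vec]

theorem finner_self_nonneg (A : Matrix (Fin n) (Fin n) ℝ) : 0 ≤ finner A A :=
  sum_nonneg fun i _ => sum_nonneg fun j _ => mul_self_nonneg (A i j)

theorem fnorm_sub_lt_fnorm_sub_of_finner_eq_zero {X P Y : Matrix (Fin n) (Fin n) ℝ}
    (horth : finner (X - P) (P - Y) = 0) (hne : Y ≠ P) : fnorm (X - P) < fnorm (X - Y) := by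
  refine Real.sqrt_lt_sqrt (finner_self_nonneg _) ?_
  have hvec_ne : vec (P - Y) ≠ 0 := mt vec_eq_zero_iff.mp (sub_ne_zero.mpr hne.symm)
  rw [finner_eq_vec_dotProduct_vec] at horth
  rw [← sub_add_sub_cancel X P Y, finner_eq_vec_dotProduct_vec, finner_eq_vec_dotProduct_vec,
    vec_add]
  exact dotProduct_self_lt_dotProduct_add_self horth hvec_ne

end Frobenius

section Projection

variable {n : ℕ} (X : Matrix (Fin n) (Fin n) ℝ)

theorem onesMatrix_eq_vecMulVec : onesMatrix n = vecMulVec 1 1 := by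
  ext i j
  simp [onesMatrix, vecMulVec_apply]

theorem exists_sub_P1_eq_vecMulVec_one_add_one_vecMulVec :
    ∃ u v : Fin n → ℝ, X - P1 X = vecMulVec u 1 + vecMulVec 1 v := by
  rw [P1, onesMatrix_eq_vecMulVec, mul_vecMulVec, vecMulVec_mul, ← vecMulVec_smul]
  have sub_correction (A B : Matrix (Fin n) (Fin n) ℝ) : X - (X + A - B) = -A + B := by abel
  rw [sub_correction, ← neg_vecMulVec]
  exact ⟨_, _, rfl⟩

theorem P1_apply (i j : Fin n) :
    P1 X i j = X i j + (1 / (n : ℝ) + (∑ k, ∑ l, X k l) / (n : ℝ) ^ 2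
      - (1 / (n : ℝ)) * ∑ l, X i l) - (1 / (n : ℝ)) * ∑ k, X k j := by
  simp [P1, onesMatrix, Matrix.sub_mul, Matrix.add_mul, mul_apply]

theorem P1_transpose : P1 Xᵀ = (P1 X)ᵀ := by
  ext i j
  simp only [P1_apply, transpose_apply]
  rw [sum_comm]
  ring

theorem sum_P1_row (i : Fin n) : ∑ j, P1 X i j = 1 := by
  have hn : (n : ℝ) ≠ 0 := Nat.cast_ne_zero.mpr i.pos.ne'
  simp only [P1_apply, sum_add_distrib, sum_sub_distrib, ← mul_sum, sum_const, card_univ,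
    Fintype.card_fin, nsmul_eq_mul]
  rw [sum_comm (f := fun j k => X k j)]
  field_simp
  ring

theorem sum_P1_col (j : Fin n) : ∑ i, P1 X i j = 1 := by
  simpa only [P1_transpose, transpose_apply] using sum_P1_row Xᵀ j

theorem finner_sub_P1_eq_zero {D : Matrix (Fin n) (Fin n) ℝ} (hrow : ∀ i, ∑ j, D i j = 0)
    (hcol : ∀ j, ∑ i, D i j = 0) : finner (X - P1 X) D = 0 := by
  obtain ⟨u, v, huv⟩ := exists_sub_P1_eq_vecMulVec_one_add_one_vecMulVec X
  rw [finner_eq_trace_transpose_mul, huv]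
  apply trace_transpose_vecMulVec_one_add_one_vecMulVec_mul_eq_zero
  · ext i
    simpa [mulVec, dotProduct] using hrow i
  · ext j
    simpa [vecMul, dotProduct] using hcol j

end Projection

end

/-- Y* = 𝒫₁(X) is the unique minimizer of ‖X − Y‖_F over the affine set
of matrices whose row sums and column sums all equal 1. -/
theorem stmt_8 (n : ℕ) (hn : 1 ≤ n) (X : Matrix (Fin n) (Fin n) ℝ) :
    (∀ i, ∑ j, P1 X i j = 1) ∧ (∀ j, ∑ i, P1 X i j = 1) ∧
      ∀ Y : Matrix (Fin n) (Fin n) ℝ,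
        ((∀ i, ∑ j, Y i j = 1) ∧ (∀ j, ∑ i, Y i j = 1)) → Y ≠ P1 X →
          fnorm (X - P1 X) < fnorm (X - Y) := by
  refine ⟨sum_P1_row X, sum_P1_col X, ?_⟩
  rintro Y ⟨hrow, hcol⟩ hne
  have horth : finner (X - P1 X) (P1 X - Y) = 0 := by
    apply finner_sub_P1_eq_zero
    · intro i
      simp only [Matrix.sub_apply, sum_sub_distrib, sum_P1_row, hrow, sub_self]
    · intro j
      simp only [Matrix.sub_apply, sum_sub_distrib, sum_P1_col, hcol, sub_self]
  exact fnorm_sub_lt_fnorm_sub_of_finner_eq_zero horth hne
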